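/- Let δ > 0, ε > 0 and C ≥ 0 be real numbers, let X be a geodesic metric space with δ-slim triangles, and let h be an isometry of X. Suppose A : ℝ → X is an isometric embedding (a geodesic line) which is translated by h, i.e. there is a real number ℓ ≥ ε with h(A(t)) = A(t + ℓ) for all t ∈ ℝ. Then every point x ∈ X with d(x, h·x) ≤ C satisfies dist(x, A(ℝ)) ≤ max(3δ, (C·⌈2δ/ε⌉ + 6δ)/2). In other words, the distance a point is moved by h gives an upper bound on its distance to the geodesic line translated by h, with the bound depending only on δ, ε and C. -/

import Mathlib

/-!
Let `n = ⌈2δ/ε⌉`, `g = h^n` and `τ = nℓ ≥ 2δ`, so that `g` translates `A` by `τ` and moves `x` by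
at most `n * C`. Suppose `d(x, g x) < 2 d(x, A) - 6δ`. Then no point of `[x, g x]` is within `3δ` of
`A`, so by slimness of the triangle `x, g x, A(T + τ)`, every `p ∈ [x, A(T + τ)]` within `2δ` of `A`
is at distance at most `δ` from some `g q` with `q ∈ [x, A(T)]`.

Let `p ∈ [x, A(T + 2τ)]` be `δ`-close both to `A` and to a geodesic from `x` towards `A(-∞)`.
Shadowing `p` by `g q`, and then `q` by `g r`, compares `p` with `g (g r)`. The isometry `g` shifts
the Busemann functions of the two ends of `A` by exactly `τ` in opposite directions. At the end `+∞`
this makes `r` nearer to `x` than `p` by `2τ - 2δ`; at the end `-∞` it then makes `p` further from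
that end, by `4τ - 4δ`, than a point at the same distance from `x` on a geodesic towards it. By its
choice `p` is only `2δ` further, so `4τ ≤ 6δ`, a contradiction. Since `X` need not be proper,
geodesic rays may not exist; far points of `A` replace the ends, at the cost of an error `η`.
-/

open Metric Filter

/-- `f` parametrizes a geodesic segment from `x` to `y` by arc length on `[0, dist x y]`. -/
def IsGeodesicSegment {X : Type*} [MetricSpace X] (f : ℝ → X) (x y : X) : Prop :=
  f 0 = x ∧ f (dist x y) = y ∧
    ∀ s ∈ Set.Icc (0 : ℝ) (dist x y), ∀ t ∈ Set.Icc (0 : ℝ) (dist x y),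
      dist (f s) (f t) = |s - t|

/-- `σ` is (the image of) a geodesic segment joining `x` to `y`. -/
def IsGeodesic {X : Type*} [MetricSpace X] (σ : Set X) (x y : X) : Prop :=
  ∃ f : ℝ → X, IsGeodesicSegment f x y ∧ σ = f '' Set.Icc 0 (dist x y)

/-- `X` is a geodesic metric space: any two points are joined by a geodesic segment. -/
def GeodesicSpace (X : Type*) [MetricSpace X] : Prop :=
  ∀ x y : X, ∃ σ : Set X, IsGeodesic σ x y

/-- Triangles in `X` are δ-slim: each side lies in the closed δ-neighborhood of the
union of the other two sides. -/
def SlimTriangles (X : Type*) [MetricSpace X] (δ : ℝ) : Prop :=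
  ∀ x y z : X, ∀ s₁ s₂ s₃ : Set X,
    IsGeodesic s₁ x y → IsGeodesic s₂ y z → IsGeodesic s₃ z x →
    ∀ p ∈ s₁, ∃ q ∈ s₂ ∪ s₃, dist p q ≤ δ

section Geodesics

variable {X : Type*} [MetricSpace X]

namespace IsGeodesic

variable {s : Set X} {x y : X}

lemma left_mem (hs : IsGeodesic s x y) : x ∈ s := by
  obtain ⟨f, ⟨h0, -, -⟩, rfl⟩ := hs
  exact ⟨0, ⟨le_rfl, dist_nonneg⟩, h0⟩

lemma right_mem (hs : IsGeodesic s x y) : y ∈ s := by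
  obtain ⟨f, ⟨-, h1, -⟩, rfl⟩ := hs
  exact ⟨dist x y, ⟨dist_nonneg, le_rfl⟩, h1⟩

lemma symm (hs : IsGeodesic s x y) : IsGeodesic s y x := by
  obtain ⟨f, ⟨h0, h1, hf⟩, rfl⟩ := hs
  refine ⟨fun t ↦ f (dist x y - t), ⟨by simpa using h1, by simpa [dist_comm y x] using h0, ?_⟩, ?_⟩
  · intro t ht u hu
    rw [dist_comm y x] at ht hu
    rw [hf _ (Set.sub_mem_Icc_zero_iff_right.2 ht) _ (Set.sub_mem_Icc_zero_iff_right.2 hu),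
      sub_sub_sub_cancel_left, abs_sub_comm]
  · rw [dist_comm y x, ← Set.image_image f (dist x y - ·), Set.image_const_sub_Icc, sub_self,
      sub_zero]

lemma image (hs : IsGeodesic s x y) {g : X → X} (hg : Isometry g) :
    IsGeodesic (g '' s) (g x) (g y) := by
  obtain ⟨f, ⟨h0, h1, hf⟩, rfl⟩ := hs
  refine ⟨g ∘ f, ⟨by simp [h0], by simp [hg.dist_eq, h1], ?_⟩, ?_⟩
  · simpa only [hg.dist_eq, Function.comp_apply] using hf
  · rw [hg.dist_eq, Set.image_comp]

lemma dist_add_dist (hs : IsGeodesic s x y) {p : X} (hp : p ∈ s) :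
    dist x p + dist p y = dist x y := by
  obtain ⟨f, ⟨h0, h1, hf⟩, rfl⟩ := hs
  obtain ⟨t, ht, rfl⟩ := hp
  have hleft := hf 0 ⟨le_rfl, dist_nonneg⟩ t ht
  have hright := hf t ht (dist x y) ⟨dist_nonneg, le_rfl⟩
  rw [h0, zero_sub, abs_neg, abs_of_nonneg ht.1] at hleft
  rw [h1, abs_sub_comm, abs_of_nonneg (sub_nonneg.2 ht.2)] at hright
  rw [hleft, hright, add_sub_cancel]

lemma exists_continuousOn (hs : IsGeodesic s x y) :
    ∃ f : ℝ → X, ContinuousOn f (Set.Icc 0 (dist x y)) ∧ s = f '' Set.Icc 0 (dist x y) := by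
  obtain ⟨f, ⟨-, -, hf⟩, rfl⟩ := hs
  have hlip : LipschitzOnWith 1 f (Set.Icc 0 (dist x y)) :=
    .of_dist_le_mul fun t ht u hu ↦ by rw [hf t ht u hu, Real.dist_eq, NNReal.coe_one, one_mul]
  exact ⟨f, hlip.continuousOn, rfl⟩

lemma isCompact (hs : IsGeodesic s x y) : IsCompact s := by
  obtain ⟨f, hf, rfl⟩ := hs.exists_continuousOn
  exact isCompact_Icc.image_of_continuousOn hf

lemma isPreconnected (hs : IsGeodesic s x y) : IsPreconnected s := by
  obtain ⟨f, hf, rfl⟩ := hs.exists_continuousOn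
  exact isPreconnected_Icc.image f hf

lemma infDist_add_infDist_le (hs : IsGeodesic s x y) {p : X} (hp : p ∈ s) (S : Set X) :
    infDist x S + infDist y S ≤ dist x y + 2 * infDist p S := by
  have hx : infDist x S ≤ infDist p S + dist x p := infDist_le_infDist_add_dist
  have hy : infDist y S ≤ infDist p S + dist y p := infDist_le_infDist_add_dist
  rw [dist_comm y p] at hy
  linarith [hs.dist_add_dist hp]

end IsGeodesic

lemma isGeodesic_image_Icc {A : ℝ → X} (hA : Isometry A) {a b : ℝ} (hab : a ≤ b) :
    IsGeodesic (A '' Set.Icc a b) (A a) (A b) := by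
  have hd : dist (A a) (A b) = b - a := by
    rw [hA.dist_eq, dist_comm, Real.dist_eq, abs_of_nonneg (sub_nonneg.2 hab)]
  refine ⟨fun t ↦ A (a + t), ⟨by simp, by simp [hd], fun t _ u _ ↦ ?_⟩, ?_⟩
  · rw [hA.dist_eq, Real.dist_eq, add_sub_add_left_eq_sub]
  · rw [hd, ← Set.image_image A (a + ·), Set.image_const_add_Icc, add_zero, add_sub_cancel]

namespace SlimTriangles

variable {δ : ℝ} {x y z p : X} {s t u : Set X}

lemma exists_center (hslim : SlimTriangles X δ) (hs : IsGeodesic s x y) (ht : IsGeodesic t y z)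
    (hu : IsGeodesic u z x) : ∃ p ∈ s, (∃ q ∈ t, dist p q ≤ δ) ∧ ∃ q ∈ u, dist p q ≤ δ := by
  have hδ : 0 ≤ δ := by
    obtain ⟨q, -, hq⟩ := hslim x y z s t u hs ht hu x hs.left_mem
    exact dist_nonneg.trans hq
  have hcover : s ⊆ cthickening δ t ∪ cthickening δ u := fun p hp ↦ by
    obtain ⟨q, hq | hq, hpq⟩ := hslim x y z s t u hs ht hu p hp
    · exact .inl (mem_cthickening_of_dist_le p q δ t hq hpq)
    · exact .inr (mem_cthickening_of_dist_le p q δ u hq hpq)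
  obtain ⟨p, hp, hpt, hpu⟩ := isPreconnected_closed_iff.1 hs.isPreconnected _ _
    isClosed_cthickening isClosed_cthickening hcover
    ⟨y, hs.right_mem, self_subset_cthickening t ht.left_mem⟩
    ⟨x, hs.left_mem, self_subset_cthickening u hu.right_mem⟩
  rw [ht.isCompact.cthickening_eq_biUnion_closedBall hδ] at hpt
  rw [hu.isCompact.cthickening_eq_biUnion_closedBall hδ] at hpu
  simp only [Set.mem_iUnion, mem_closedBall, exists_prop] at hpt hpu
  exact ⟨p, hp, hpt, hpu⟩

lemma exists_dist_le_of_infDist (hslim : SlimTriangles X δ) (hgeo : GeodesicSpace X)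
    (hs : IsGeodesic s x z) (ht : IsGeodesic t y z) (hp : p ∈ s) {S : Set X}
    (hfar : dist x y + 2 * (infDist p S + δ) < infDist x S + infDist y S) :
    ∃ q ∈ t, dist p q ≤ δ := by
  obtain ⟨u, hu⟩ := hgeo y x
  obtain ⟨q, hq | hq, hpq⟩ := hslim x z y s t u hs ht.symm hu p hp
  · exact ⟨q, hq, hpq⟩
  · have hqS : infDist q S ≤ infDist p S + dist q p := infDist_le_infDist_add_dist
    rw [dist_comm q p] at hqS
    linarith [hu.symm.infDist_add_infDist_le hq S]

end SlimTriangles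

end Geodesics

section GeodesicLine

variable {X : Type*} [PseudoMetricSpace X]

/-- The Busemann function of the end `+∞` of a geodesic line `A`. For an isometric embedding `A`,
the function `t ↦ dist x (A t) - t` is antitone and bounded below, so that its infimum is its limit
at `+∞`. The end `-∞` is that of the reversed line `fun t ↦ A (-t)`. -/
noncomputable def busemann (A : ℝ → X) (x : X) : ℝ := ⨅ t, (dist x (A t) - t)

variable {A : ℝ → X}

lemma busemann_le (hA : Isometry A) (x : X) (t : ℝ) : busemann A x ≤ dist x (A t) - t := by
  refine ciInf_le ⟨-dist x (A 0), ?_⟩ t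
  rintro _ ⟨u, rfl⟩
  have hu : |u| ≤ dist x (A u) + dist x (A 0) := by
    simpa [hA.dist_eq] using dist_triangle_left (A u) (A 0) x
  linarith [le_abs_self u]

lemma busemann_le_add_dist (hA : Isometry A) (x y : X) :
    busemann A x ≤ busemann A y + dist x y := by
  rw [← sub_le_iff_le_add]
  refine le_ciInf fun t ↦ ?_
  linarith [busemann_le hA x t, dist_triangle x y (A t)]

lemma eventually_dist_sub_le_busemann_add (hA : Isometry A) (x : X) {η : ℝ} (hη : 0 < η) :
    ∀ᶠ T in atTop, dist x (A T) - T ≤ busemann A x + η := by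
  obtain ⟨t, ht⟩ := exists_lt_of_ciInf_lt (lt_add_of_pos_right (busemann A x) hη)
  filter_upwards [eventually_ge_atTop t] with T hT
  have htT : dist (A t) (A T) = T - t := by
    rw [hA.dist_eq, dist_comm, Real.dist_eq, abs_of_nonneg (sub_nonneg.2 hT)]
  linarith [dist_triangle x (A t) (A T)]

variable {g : X → X} {τ : ℝ}

lemma busemann_translate (hA : Isometry A) (hg : Isometry g) (hgA : ∀ t, g (A t) = A (t + τ))
    (x : X) : busemann A (g x) = busemann A x - τ := by
  have hdist (t : ℝ) : dist (g x) (A (t + τ)) = dist x (A t) := by rw [← hgA, hg.dist_eq]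
  apply le_antisymm
  · refine le_sub_iff_add_le.2 (le_ciInf fun t ↦ ?_)
    linarith [busemann_le hA (g x) (t + τ), hdist t]
  · refine le_ciInf fun t ↦ ?_
    have ht := hdist (t - τ)
    rw [sub_add_cancel] at ht
    linarith [busemann_le hA x (t - τ)]

lemma infDist_range_translate (hg : Isometry g) (hgA : ∀ t, g (A t) = A (t + τ)) (x : X) :
    infDist (g x) (Set.range A) = infDist x (Set.range A) := by
  have hrange : g '' Set.range A = Set.range A := by
    rw [← Set.range_comp, show g ∘ A = A ∘ Equiv.addRight τ from funext hgA,
      (Equiv.surjective _).range_comp]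
  simpa only [hrange] using infDist_image hg (x := x) (t := Set.range A)

end GeodesicLine

lemma IsGeodesic.busemann_add_dist_le {X : Type*} [MetricSpace X] {A : ℝ → X} (hA : Isometry A)
    {s : Set X} {x p : X} {T η : ℝ} (hs : IsGeodesic s x (A T)) (hp : p ∈ s)
    (hT : dist x (A T) - T ≤ busemann A x + η) :
    busemann A p + dist x p ≤ busemann A x + η := by
  linarith [busemann_le hA p T, hs.dist_add_dist hp]

section Translation

variable {X : Type*} [MetricSpace X] {δ η τ T : ℝ} {A : ℝ → X} {g : X → X} {x : X}

lemma exists_infDist_range_le_and_busemann_neg_le (hslim : SlimTriangles X δ)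
    (hgeo : GeodesicSpace X) (hA : Isometry A) (hη : 0 < η) {s : Set X}
    (hs : IsGeodesic s x (A T)) :
    ∃ p ∈ s, infDist p (Set.range A) ≤ δ ∧
      busemann (fun t ↦ A (-t)) p + dist x p ≤ busemann (fun t ↦ A (-t)) x + η + 2 * δ := by
  have hA' : Isometry fun t ↦ A (-t) := hA.comp (IsometryEquiv.neg ℝ).isometry
  obtain ⟨S, hS, hST⟩ := ((eventually_dist_sub_le_busemann_add hA' x hη).and
    (eventually_ge_atTop (-T))).exists
  obtain ⟨u, hu⟩ := hgeo x (A (-S))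
  obtain ⟨p, hp, ⟨a, ha, hpa⟩, q, hq, hpq⟩ := hslim.exists_center hs
    (isGeodesic_image_Icc hA (neg_le.1 hST)).symm hu.symm
  refine ⟨p, hp, (infDist_le_dist_of_mem (Set.image_subset_range A _ ha)).trans hpa, ?_⟩
  have hqend := hu.busemann_add_dist_le hA' hq hS
  linarith [busemann_le_add_dist hA' p q, dist_triangle_right x p q]

lemma exists_dist_translate_le (hslim : SlimTriangles X δ) (hgeo : GeodesicSpace X)
    (hA : Isometry A) (hg : Isometry g) (hgA : ∀ t, g (A t) = A (t + τ))
    (hshort : dist x (g x) + 6 * δ < 2 * infDist x (Set.range A))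
    (hT : dist x (A T) - T ≤ busemann A x + η) {s t : Set X} (hs : IsGeodesic s x (A (T + τ)))
    (ht : IsGeodesic t x (A T)) {p : X} (hp : p ∈ s) (hpA : infDist p (Set.range A) ≤ 2 * δ) :
    ∃ q ∈ t, dist p (g q) ≤ δ ∧ dist x q + τ ≤ dist x p + δ + η := by
  have hgt : IsGeodesic (g '' t) (g x) (A (T + τ)) := hgA T ▸ ht.image hg
  obtain ⟨_, ⟨q, hq, rfl⟩, hpq⟩ := hslim.exists_dist_le_of_infDist hgeo hs hgt hp
    (S := Set.range A) (by rw [infDist_range_translate hg hgA]; linarith)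
  refine ⟨q, hq, hpq, ?_⟩
  have hqend := ht.busemann_add_dist_le hA hq hT
  have hgq := busemann_translate hA hg hgA q
  linarith [busemann_le_add_dist hA x p, busemann_le_add_dist hA p (g q)]

theorem two_mul_infDist_range_le_dist_translate (hslim : SlimTriangles X δ)
    (hgeo : GeodesicSpace X) (hA : Isometry A) (hg : Isometry g)
    (hgA : ∀ t, g (A t) = A (t + τ)) (hτ : 3 * δ < 2 * τ) (x : X) :
    2 * infDist x (Set.range A) ≤ dist x (g x) + 6 * δ := by
  by_contra! hshort
  obtain ⟨η, hη, hητ⟩ : ∃ η, 0 < η ∧ 6 * δ + 3 * η < 4 * τ :=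
    ⟨(2 * τ - 3 * δ) / 2, by linarith, by linarith⟩
  obtain ⟨T, hT⟩ := eventually_atTop.1 (eventually_dist_sub_le_busemann_add hA x hη)
  obtain ⟨s, hs⟩ := hgeo x (A (T + τ + τ))
  obtain ⟨t, ht⟩ := hgeo x (A (T + τ))
  obtain ⟨u, hu⟩ := hgeo x (A T)
  obtain ⟨p, hp, hpA, hpend⟩ :=
    exists_infDist_range_le_and_busemann_neg_le hslim hgeo hA hη hs
  have hδ : 0 ≤ δ := infDist_nonneg.trans hpA
  obtain ⟨q, hq, hpq, hxq⟩ := exists_dist_translate_le hslim hgeo hA hg hgA hshort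
    (hT (T + τ) (by linarith)) hs ht hp (by linarith)
  have hqA : infDist q (Set.range A) ≤ 2 * δ := by
    rw [← infDist_range_translate hg hgA, two_mul]
    rw [dist_comm] at hpq
    exact infDist_le_infDist_add_dist.trans (add_le_add hpA hpq)
  obtain ⟨r, -, hqr, hxr⟩ := exists_dist_translate_le hslim hgeo hA hg hgA hshort
    (hT T le_rfl) ht hu hq hqA
  have hA' : Isometry fun t ↦ A (-t) := hA.comp (IsometryEquiv.neg ℝ).isometry
  have hgA' (t : ℝ) : g (A (-t)) = A (-(t + -τ)) := by rw [hgA, neg_add, neg_neg]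
  have hpr : dist p (g (g r)) ≤ 2 * δ := by
    linarith [dist_triangle p (g q) (g (g r)), hg.dist_eq q (g r)]
  have hshift : busemann (fun t ↦ A (-t)) (g (g r)) = busemann (fun t ↦ A (-t)) r + 2 * τ := by
    rw [busemann_translate hA' hg hgA', busemann_translate hA' hg hgA']
    ring
  have hdetour : busemann (fun t ↦ A (-t)) x + 4 * τ ≤
      busemann (fun t ↦ A (-t)) p + dist x p + 4 * δ + 2 * η := by
    have hpr_end := busemann_le_add_dist hA' (g (g r)) p
    rw [dist_comm] at hpr_end
    linarith [busemann_le_add_dist hA' x r]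
  linarith

end Translation

lemma iterate_translate {X R : Type*} [AddMonoid R] {h : X → X} {A : R → X} {ℓ : R}
    (htrans : ∀ t, h (A t) = A (t + ℓ)) (n : ℕ) (t : R) : h^[n] (A t) = A (t + n • ℓ) := by
  have hsemi : Function.Semiconj A (· + ℓ) h := fun t ↦ (htrans t).symm
  simpa using (hsemi.iterate_right n t).symm

section Iterate

variable {X : Type*} [PseudoMetricSpace X] {f : X → X}

lemma isometry_iterate (hf : Isometry f) (n : ℕ) : Isometry f^[n] := by
  induction n with
  | zero => exact isometry_id
  | succ n ih => exact ih.comp hf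

lemma dist_iterate_self_le (hf : LipschitzWith 1 f) (x : X) (n : ℕ) :
    dist x (f^[n] x) ≤ n * dist x (f x) := by
  have hstep (k : ℕ) : dist (f^[k] x) (f^[k + 1] x) ≤ dist x (f x) := by
    simpa using hf.dist_iterate_succ_le_geometric x k
  simpa using dist_le_range_sum_of_dist_le n fun {k} _ ↦ hstep k

end Iterate

theorem bounded_displacement_implies_close_to_axis
    (δ ε C : ℝ) (hδ : 0 < δ) (hε : 0 < ε) (hC : 0 ≤ C)
    (X : Type*) [MetricSpace X]
    (hgeo : GeodesicSpace X) (hslim : SlimTriangles X δ)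
    (h : X → X) (hiso : Isometry h)
    (A : ℝ → X) (hA : Isometry A)
    (ℓ : ℝ) (hℓ : ε ≤ ℓ) (htrans : ∀ t : ℝ, h (A t) = A (t + ℓ))
    (x : X) (hx : dist x (h x) ≤ C) :
    infDist x (Set.range A) ≤ max (3 * δ) ((C * (⌈2 * δ / ε⌉₊ : ℝ) + 6 * δ) / 2) := by
  set n := ⌈2 * δ / ε⌉₊
  have hn : 2 * δ ≤ n * ℓ := by
    calc 2 * δ ≤ n * ε := (div_le_iff₀ hε).1 (Nat.le_ceil _)
      _ ≤ n * ℓ := by gcongr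
  have hdisp : dist x (h^[n] x) ≤ C * n := by
    calc dist x (h^[n] x) ≤ n * dist x (h x) := dist_iterate_self_le hiso.lipschitz x n
      _ ≤ C * n := by rw [mul_comm]; gcongr
  have htransn (t : ℝ) : h^[n] (A t) = A (t + n * ℓ) := by
    rw [iterate_translate htrans, nsmul_eq_mul]
  have hdist := two_mul_infDist_range_le_dist_translate hslim hgeo hA (isometry_iterate hiso n)
    htransn (by linarith) x
  exact le_max_of_le_right (by linarith)
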